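/- For every integer k ≥ 6, the online size Ramsey number of the 4-cycle versus the path on k vertices satisfies ř(C₄,P_k) ≤ 3k − 5. -/

import Mathlib

open SimpleGraph

/-- The set `S` of edges of the infinite complete graph on `ℕ` contains a copy of
the graph `G`: there is an injective map of the vertices of `G` into `ℕ` sending
every edge of `G` into `S`. -/
def HasCopy {V : Type*} (G : SimpleGraph V) (S : Set (Sym2 ℕ)) : Prop :=
  ∃ f : V → ℕ, Function.Injective f ∧ ∀ a b, G.Adj a b → s(f a, f b) ∈ S

/-- `BuilderWinsIn G H R B r` means: in the online Ramsey game with targets a red copy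
of `G` and a blue copy of `H`, from the position in which the edges in `R` have been
colored red and the edges in `B` have been colored blue, Builder has a strategy that
guarantees, against every Painter strategy, that within at most `r` further rounds the
colored edges contain a red copy of `G` or a blue copy of `H`.  (In each round Builder
chooses a previously unchosen non-loop edge of the infinite complete graph on `ℕ`, and
Painter immediately colors it red or blue; so Builder wins within `r + 1` rounds iff he
has already won, or he can choose an edge such that whichever color Painter gives it,
he can win within `r` further rounds.) -/
def BuilderWinsIn {V W : Type*} (G : SimpleGraph V) (H : SimpleGraph W) :
    Set (Sym2 ℕ) → Set (Sym2 ℕ) → ℕ → Prop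
  | R, B, 0 => HasCopy G R ∨ HasCopy H B
  | R, B, (r + 1) => HasCopy G R ∨ HasCopy H B ∨
      ∃ e : Sym2 ℕ, ¬ e.IsDiag ∧ e ∉ R ∧ e ∉ B ∧
        BuilderWinsIn G H (insert e R) B r ∧ BuilderWinsIn G H R (insert e B) r

/-- The online size Ramsey number `ř(G, H)`: the least `t` such that, starting from the
empty position, Builder can force a red copy of `G` or a blue copy of `H` within at
most `t` rounds. -/
noncomputable def onlineRamsey {V W : Type*} (G : SimpleGraph V) (H : SimpleGraph W) : ℕ :=
  sInf {t | BuilderWinsIn G H ∅ ∅ t}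

/-!
Builder can lengthen a blue path by one vertex in four rounds: joining two new vertices to both ends
of the path yields a blue edge or a red `C₄`. He can also lengthen it by two vertices in six rounds:
if the edges from two new vertices to one end are both red, they threaten a red `C₄` through every
further vertex, and this gains two path vertices in the other four rounds. So from a blue path on
`p ≥ 2` vertices he wins within `3 (k - p) + 1` rounds.

He opens with three edges at one vertex and must then win within `3 k - 8` rounds. Two blue edges
form a path on three vertices, for which this is exactly the bound above. If two or three of the
edges are red, they force so many later edges to be blue, because a red one would close a red `C₄`,
that Builder gains three rounds per new path vertex: he reaches a blue path on `p ∈ {4, 5, 6}`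
vertices within `3 (p - 3)` further rounds.
-/

namespace BuilderWinsIn

variable {V W : Type*} {G : SimpleGraph V} {H : SimpleGraph W} {R B : Set (Sym2 ℕ)} {r s : ℕ}

lemma of_hasCopy_red (r : ℕ) (h : HasCopy G R) : BuilderWinsIn G H R B r := by
  cases r <;> exact Or.inl h

lemma of_hasCopy_blue (r : ℕ) (h : HasCopy H B) : BuilderWinsIn G H R B r := by
  cases r with
  | zero => exact Or.inr h
  | succ r => exact Or.inr (Or.inl h)

lemma succ (h : BuilderWinsIn G H R B r) : BuilderWinsIn G H R B (r + 1) := by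
  induction r generalizing R B with
  | zero => exact h.elim (of_hasCopy_red _) (of_hasCopy_blue _)
  | succ r ih =>
    rcases h with hred | hblue | ⟨e, he, heR, heB, hred, hblue⟩
    · exact of_hasCopy_red _ hred
    · exact of_hasCopy_blue _ hblue
    · exact Or.inr (Or.inr ⟨e, he, heR, heB, ih hred, ih hblue⟩)

lemma mono (h : BuilderWinsIn G H R B r) (hrs : r ≤ s) : BuilderWinsIn G H R B s :=
  Nat.le_induction h (fun _ _ ih => ih.succ) s hrs

-- On an already colored edge Builder skips the round.
lemma move (a b : ℕ) (hab : a ≠ b) (hred : BuilderWinsIn G H (insert s(a, b) R) B r)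
    (hblue : BuilderWinsIn G H R (insert s(a, b) B) r) : BuilderWinsIn G H R B (r + 1) := by
  by_cases hR : s(a, b) ∈ R
  · exact (Set.insert_eq_of_mem hR ▸ hred).succ
  by_cases hB : s(a, b) ∈ B
  · exact (Set.insert_eq_of_mem hB ▸ hblue).succ
  exact Or.inr (Or.inr ⟨s(a, b), by simpa using hab, hR, hB, hred, hblue⟩)

end BuilderWinsIn

lemma hasCopy_cycleGraph_four {S : Set (Sym2 ℕ)} {a b c d : ℕ} (hnodup : [a, b, c, d].Nodup)
    (hS : {s(a, b), s(b, c), s(c, d), s(d, a)} ⊆ S) : HasCopy (cycleGraph 4) S := by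
  refine ⟨[a, b, c, d].get, List.nodup_iff_injective_get.1 hnodup, fun i j hij => ?_⟩
  fin_cases i <;> fin_cases j <;> first
    | apply absurd hij; decide
    | apply hS; simp

namespace BuilderWinsIn

variable {W : Type*} {H : SimpleGraph W} {R B : Set (Sym2 ℕ)} {r : ℕ}

lemma of_red_cycle (a b c d : ℕ) (hnodup : [a, b, c, d].Nodup)
    (hR : {s(a, b), s(b, c), s(c, d), s(d, a)} ⊆ R) : BuilderWinsIn (cycleGraph 4) H R B r :=
  of_hasCopy_red r (hasCopy_cycleGraph_four hnodup hR)

lemma move_of_red_path (a b c d : ℕ) (hnodup : [a, b, c, d].Nodup)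
    (hR : {s(b, c), s(c, d), s(d, a)} ⊆ R)
    (hblue : BuilderWinsIn (cycleGraph 4) H R (insert s(a, b) B) r) :
    BuilderWinsIn (cycleGraph 4) H R B (r + 1) :=
  move a b (by grind) (of_red_cycle a b c d hnodup (Set.insert_subset_insert hR)) hblue

end BuilderWinsIn

/-- The list `P` enumerates, in order, the vertices of a path from `u` to `v` all of whose edges
belong to `S`. -/
structure IsPathIn (S : Set (Sym2 ℕ)) (P : List ℕ) (u v : ℕ) : Prop where
  nodup : P.Nodup
  isChain : P.IsChain fun a b => s(a, b) ∈ S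
  head_mem : u ∈ P.head?
  last_mem : v ∈ P.getLast?

namespace IsPathIn

variable {S : Set (Sym2 ℕ)} {P : List ℕ} {u v : ℕ}

lemma left_mem (h : IsPathIn S P u v) : u ∈ P := List.mem_of_mem_head? h.head_mem

lemma right_mem (h : IsPathIn S P u v) : v ∈ P := List.mem_of_mem_getLast? h.last_mem

lemma reverse (h : IsPathIn S P u v) : IsPathIn S P.reverse v u where
  nodup := List.nodup_reverse.2 h.nodup
  isChain := by
    rw [List.isChain_reverse]
    exact h.isChain.imp fun a b hab => Sym2.eq_swap ▸ hab
  head_mem := by simpa using h.last_mem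
  last_mem := by simpa using h.head_mem

lemma cons (h : IsPathIn S P u v) (x : ℕ) (hx : x ∉ P) :
    IsPathIn (insert s(x, u) S) (x :: P) x v where
  nodup := List.nodup_cons.2 ⟨hx, h.nodup⟩
  isChain := by
    refine (h.isChain.imp fun _ _ => Set.mem_insert_of_mem _).cons fun y hy => ?_
    obtain rfl : y = u := Option.mem_unique hy h.head_mem
    exact Set.mem_insert _ _
  head_mem := rfl
  last_mem := by simp [List.getLast?_cons, Option.mem_def.1 h.last_mem]

lemma ne (h : IsPathIn S P u v) (hP : 2 ≤ P.length) : u ≠ v := by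
  rintro rfl
  obtain ⟨nodup, -, head, last⟩ := h
  match P with
  | _ :: _ :: _ => grind

lemma hasCopy_pathGraph (h : IsPathIn S P u v) : HasCopy (pathGraph P.length) S := by
  refine ⟨P.get, List.nodup_iff_injective_get.1 h.nodup, fun i j hij => ?_⟩
  have adj := List.isChain_iff_getElem.1 h.isChain
  rcases pathGraph_adj.1 hij with hij | hij
  · simpa [hij] using adj i (by omega)
  · rw [Sym2.eq_swap]
    simpa [hij] using adj j (by omega)

end IsPathIn

/-- From every position with a blue path on `n` vertices, Builder forces a red `C₄` or a blue copy
of `H` within `r` further rounds. -/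
def WinsFromPath {W : Type*} (H : SimpleGraph W) (n r : ℕ) : Prop :=
  ∀ ⦃R B : Set (Sym2 ℕ)⦄ (P : List ℕ) ⦃u v : ℕ⦄, IsPathIn B P u v → P.length = n →
    BuilderWinsIn (cycleGraph 4) H R B r

namespace WinsFromPath

variable {W : Type*} {H : SimpleGraph W} {R B : Set (Sym2 ℕ)} {P : List ℕ} {u v a b n r s : ℕ}

lemma mono (h : WinsFromPath H n r) (hrs : r ≤ s) : WinsFromPath H n s :=
  fun _ _ _ _ _ hP hlen => (h _ hP hlen).mono hrs

lemma move_end (h : WinsFromPath H (n + 1) r) (hP : IsPathIn B P u v) (hlen : P.length = n)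
    (x : ℕ) (hx : x ∉ P) (hrs : r ≤ s)
    (hred : BuilderWinsIn (cycleGraph 4) H (insert s(x, u) R) B s) :
    BuilderWinsIn (cycleGraph 4) H R B (s + 1) :=
  .move x u (ne_of_mem_of_not_mem hP.left_mem hx).symm hred
    ((h _ (hP.cons x hx) (by simp [hlen])).mono hrs)

lemma of_succ (h : WinsFromPath H (n + 1) r) (hn : 2 ≤ n) : WinsFromPath H n (r + 4) := by
  intro R B P u v hP hlen
  obtain ⟨x, hx : x ∉ P⟩ := P.finite_toSet.exists_notMem
  obtain ⟨y, hy : y ∉ x :: P⟩ := (x :: P).finite_toSet.exists_notMem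
  have huv : u ≠ v := hP.ne (by omega)
  have hu := hP.left_mem
  have hv := hP.right_mem
  refine h.move_end hP hlen x hx (by omega) ?_
  refine h.move_end hP hlen y (by grind) (by omega) ?_
  refine h.move_end hP.reverse (by simpa) x (by grind) (by omega) ?_
  refine h.move_end hP.reverse (by simpa) y (by grind) (by omega) ?_
  exact .of_red_cycle u x v y (by grind) (by grind)

lemma of_two_red_edges_at_end (h : WinsFromPath H (n + 2) r) (hn : 2 ≤ n) (hP : IsPathIn B P u v)
    (hlen : P.length = n) (ha : a ∉ P) (hb : b ∉ P) (hab : a ≠ b) (hR : {s(u, a), s(u, b)} ⊆ R) :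
    BuilderWinsIn (cycleGraph 4) H R B (r + 4) := by
  obtain ⟨c, hc : c ∉ a :: b :: P⟩ := (a :: b :: P).finite_toSet.exists_notMem
  have huv : u ≠ v := hP.ne (by omega)
  have hu := hP.left_mem
  have hv := hP.right_mem
  refine .move a v (by grind) ?_ ?_
  · refine .move c v (by grind) ?_ ?_
    · refine .move_of_red_path c u a v (by grind) (by grind) ?_
      refine .move_of_red_path b v a u (by grind) (by grind) ?_
      exact h _ ((hP.cons c (by grind)).reverse.cons b (by grind)) (by simp [hlen])
    · have hQ := hP.reverse.cons c (by grind)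
      refine h.move_end hQ (by simp [hlen]) a (by grind) (by omega) ?_
      refine h.move_end hQ (by simp [hlen]) b (by grind) (by omega) ?_
      exact .of_red_cycle u a c b (by grind) (by grind)
  · have hQ := hP.reverse.cons a (by grind)
    refine h.move_end hQ.reverse (by simp [hlen]) c (by grind) (by omega) ?_
    refine h.move_end hQ (by simp [hlen]) b (by grind) (by omega) ?_
    refine h.move_end hQ (by simp [hlen]) c (by grind) (by omega) ?_
    exact .of_red_cycle u b a c (by grind) (by grind)

lemma of_add_two (h : WinsFromPath H (n + 2) r) (hn : 2 ≤ n) : WinsFromPath H n (r + 6) := by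
  intro R B P u v hP hlen
  obtain ⟨a, ha : a ∉ P⟩ := P.finite_toSet.exists_notMem
  obtain ⟨b, hb : b ∉ a :: P⟩ := (a :: P).finite_toSet.exists_notMem
  have hsucc : WinsFromPath H (n + 1) (r + 4) := h.of_succ (by omega)
  refine hsucc.move_end hP hlen a ha (by omega) ?_
  refine hsucc.move_end hP hlen b (by grind) le_rfl ?_
  exact h.of_two_red_edges_at_end hn hP hlen (b := b) ha (by grind) (by grind) (by grind)

end WinsFromPath

lemma winsFromPath_pathGraph_self (k : ℕ) : WinsFromPath (pathGraph k) k 0 :=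
  fun _ _ _ _ _ hP hlen => .of_hasCopy_blue 0 (hlen ▸ hP.hasCopy_pathGraph)

lemma winsFromPath_pathGraph {k p : ℕ} (hp : 2 ≤ p) :
    ∀ j, p + j = k → WinsFromPath (pathGraph k) p (3 * j + 1)
  | 0, rfl => (winsFromPath_pathGraph_self p).mono (Nat.zero_le _)
  | 1, rfl => (winsFromPath_pathGraph_self (p + 1)).of_succ hp
  | j + 2, hk => (winsFromPath_pathGraph (p := p + 2) (by omega) j (by omega)).of_add_two hp

section Opening

variable {W : Type*} {H : SimpleGraph W} {R B : Set (Sym2 ℕ)} {s o a b c x y : ℕ}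

lemma builderWinsIn_of_red_star_of_blue_path (h5 : WinsFromPath H 5 (s + 3))
    (h6 : WinsFromPath H 6 s) (hnodup : [o, a, b, c, x, y].Nodup)
    (hR : {s(o, a), s(o, b), s(o, c)} ⊆ R) (hB : {s(a, x), s(x, b)} ⊆ B) :
    BuilderWinsIn (cycleGraph 4) H R B (s + 6) := by
  refine .move y c (by grind) ?_ ?_
  · refine .move c a (by grind) ?_ ?_
    · refine .move_of_red_path c b o a (by grind) (by grind) ?_
      refine .move_of_red_path y a o c (by grind) (by grind) ?_
      refine .move_of_red_path y o a c (by grind) (by grind) ?_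
      exact (h6 [c, b, x, a, y, o] ⟨by grind, by grind, rfl, rfl⟩ rfl).mono (by omega)
    · refine .move_of_red_path y b o c (by grind) (by grind) ?_
      exact (h5 [c, a, x, b, y] ⟨by grind, by grind, rfl, rfl⟩ rfl).mono (by omega)
  · refine .move y b (by grind) ?_ ?_
    · refine .move_of_red_path y a o b (by grind) (by grind) ?_
      exact h5 [b, x, a, y, c] ⟨by grind, by grind, rfl, rfl⟩ rfl
    · exact (h5 [a, x, b, y, c] ⟨by grind, by grind, rfl, rfl⟩ rfl).mono (by omega)

lemma builderWinsIn_of_red_star (h5 : WinsFromPath H 5 (s + 3)) (h6 : WinsFromPath H 6 s)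
    (hnodup : [o, a, b, c, x, y].Nodup) (hR : {s(o, a), s(o, b), s(o, c)} ⊆ R) :
    BuilderWinsIn (cycleGraph 4) H R B (s + 9) := by
  have two_blue {R' B' : Set (Sym2 ℕ)} (p q t : ℕ) (hpqt : [o, p, q, t, x, y].Nodup)
      (hR' : {s(o, p), s(o, q), s(o, t)} ⊆ R') (hB' : {s(p, x), s(x, q)} ⊆ B') :=
    builderWinsIn_of_red_star_of_blue_path h5 h6 hpqt hR' hB'
  refine .move x a (by grind) ?_ ?_
  · refine .move_of_red_path x b o a (by grind) (by grind) ?_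
    refine .move_of_red_path x c o a (by grind) (by grind) ?_
    exact two_blue b c a (by grind) (by grind) (by grind)
  · refine .move x b (by grind) ?_ ?_
    · refine .move_of_red_path x c o b (by grind) (by grind) ?_
      exact two_blue a c b (by grind) (by grind) (by grind)
    · exact (two_blue a b c (by grind) (by grind) (by grind)).mono (by omega)

lemma builderWinsIn_of_red_path_of_blue_path (h4 : WinsFromPath H 4 (s + 6))
    (h5 : WinsFromPath H 5 (s + 3)) (hnodup : [o, a, b, c, x].Nodup)
    (hR : {s(a, o), s(o, b)} ⊆ R) (hB : {s(o, c), s(c, a)} ⊆ B) :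
    BuilderWinsIn (cycleGraph 4) H R B (s + 8) := by
  refine .move a b (by grind) ?_ ?_
  · refine .move x o (by grind) ?_ ?_
    · refine .move_of_red_path x a b o (by grind) (by grind) ?_
      refine .move_of_red_path x b a o (by grind) (by grind) ?_
      exact (h5 [o, c, a, x, b] ⟨by grind, by grind, rfl, rfl⟩ rfl).mono (by omega)
    · exact h4 [x, o, c, a] ⟨by grind, by grind, rfl, rfl⟩ rfl
  · exact (h4 [o, c, a, b] ⟨by grind, by grind, rfl, rfl⟩ rfl).mono (by omega)

lemma builderWinsIn_of_red_path_of_blue_chord (h4 : WinsFromPath H 4 (s + 6))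
    (h5 : WinsFromPath H 5 (s + 3)) (hnodup : [o, a, b, c, x].Nodup)
    (hR : {s(b, o), s(o, a), s(a, c)} ⊆ R) (hB : s(o, c) ∈ B) :
    BuilderWinsIn (cycleGraph 4) H R B (s + 8) := by
  refine .move x o (by grind) ?_ ?_
  · refine .move a b (by grind) ?_ ?_
    · refine .move_of_red_path a x o b (by grind) (by grind) ?_
      refine .move_of_red_path b x o a (by grind) (by grind) ?_
      refine .move_of_red_path c b o a (by grind) (by grind) ?_
      exact h5 [o, c, b, x, a] ⟨by grind, by grind, rfl, rfl⟩ rfl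
    · refine .move a x (by grind) ?_ ?_
      · refine .move_of_red_path b x a o (by grind) (by grind) ?_
        refine .move_of_red_path c x o a (by grind) (by grind) ?_
        exact h5 [a, b, x, c, o] ⟨by grind, by grind, rfl, rfl⟩ rfl
      · refine .move_of_red_path c b o a (by grind) (by grind) ?_
        exact (h5 [o, c, b, a, x] ⟨by grind, by grind, rfl, rfl⟩ rfl).mono (by omega)
  · refine .move_of_red_path c b o a (by grind) (by grind) ?_
    exact h4 [x, o, c, b] ⟨by grind, by grind, rfl, rfl⟩ rfl

lemma builderWinsIn_of_red_path_of_blue_edge (h4 : WinsFromPath H 4 (s + 6))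
    (h5 : WinsFromPath H 5 (s + 3)) (hnodup : [o, a, b, c, x].Nodup)
    (hR : {s(o, a), s(o, b)} ⊆ R) (hB : s(o, c) ∈ B) :
    BuilderWinsIn (cycleGraph 4) H R B (s + 9) :=
  .move c a (by grind)
    (builderWinsIn_of_red_path_of_blue_chord h4 h5 hnodup (by grind) hB)
    (builderWinsIn_of_red_path_of_blue_path h4 h5 hnodup (by grind) (by grind))

lemma builderWinsIn_of_winsFromPath (h3 : WinsFromPath H 3 (s + 9))
    (h4 : WinsFromPath H 4 (s + 6)) (h5 : WinsFromPath H 5 (s + 3)) (h6 : WinsFromPath H 6 s) :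
    BuilderWinsIn (cycleGraph 4) H R B (s + 12) := by
  have two_red {R' B' : Set (Sym2 ℕ)} (a b c : ℕ) (hnodup : [0, a, b, c, 4].Nodup)
      (hR : {s(0, a), s(0, b)} ⊆ R') (hB : s(0, c) ∈ B') :=
    builderWinsIn_of_red_path_of_blue_edge h4 h5 hnodup hR hB
  have two_blue {R' B' : Set (Sym2 ℕ)} (a b : ℕ) (hnodup : [a, 0, b].Nodup)
      (hB : {s(a, 0), s(0, b)} ⊆ B') : BuilderWinsIn (cycleGraph 4) H R' B' (s + 9) :=
    h3 [a, 0, b] ⟨hnodup, by grind, rfl, rfl⟩ rfl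
  refine .move 0 1 (by decide) (.move 0 2 (by decide) ?_ ?_) (.move 0 2 (by decide) ?_ ?_)
  · refine .move 0 3 (by decide) ?_ ?_
    · exact builderWinsIn_of_red_star (o := 0) (a := 1) (b := 2) (c := 3) (x := 4) (y := 5)
        h5 h6 (by decide) (by grind)
    · exact two_red 1 2 3 (by decide) (by grind) (by grind)
  · refine .move 0 3 (by decide) ?_ ?_
    · exact two_red 1 3 2 (by decide) (by grind) (by grind)
    · exact two_blue 2 3 (by decide) (by grind)
  · refine .move 0 3 (by decide) ?_ ?_
    · exact two_red 2 3 1 (by decide) (by grind) (by grind)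
    · exact two_blue 1 3 (by decide) (by grind)
  · exact (two_blue 1 2 (by decide) (by grind)).mono (by omega)

end Opening

/-- For every integer `k ≥ 6` we have `ř(C₄, Pₖ) ≤ 3 * k - 5`. -/
theorem onlineRamsey_C4_path_upper (k : ℕ) (hk : 6 ≤ k) :
    onlineRamsey (cycleGraph 4) (pathGraph k) ≤ 3 * k - 5 := by
  obtain ⟨m, rfl⟩ : ∃ m, k = m + 6 := ⟨k - 6, by omega⟩
  have wins (p j : ℕ) (hp : 2 ≤ p) (hj : p + j = m + 6) :
      WinsFromPath (pathGraph (m + 6)) p (3 * j + 1) :=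
    winsFromPath_pathGraph hp j hj
  refine Nat.sInf_le (BuilderWinsIn.mono (r := 3 * m + 1 + 12) ?_ (by omega))
  exact builderWinsIn_of_winsFromPath
    ((wins 3 (m + 3) (by omega) (by omega)).mono (by omega))
    ((wins 4 (m + 2) (by omega) (by omega)).mono (by omega))
    ((wins 5 (m + 1) (by omega) (by omega)).mono (by omega))
    (wins 6 m (by omega) (by omega))
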